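/- Let a ∈ [0,1]. There exists a constant C > 0, depending only on a, such that for every real-valued Schwartz function u on ℝ one has |∫_ℝ u(x)³ dx| ≤ C ‖u‖_{L²(ℝ)}^{3(1 − 1/(3+3a))} ‖u‖_{H^{1/2 + a/2}}^{3/(3+3a)}. -/

import Mathlib

/-!
Let `v = 𝓕⁻ u`. Since `∫ u³` is the integral of `v(ξ) v(η) v(ζ)` over the plane `ξ + η + ζ = 0`,
only the modulus of `v` matters. At each point of the plane, single out the frequency of smallest
modulus, say `ξ`, and bound `|v(η) v(ζ)|` by `|v(η)|² + |v(ζ)|²`. The symmetries of the plane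
preserve its measure, so the integral is at most `6 ∫ (∫_{|ξ| ≤ |η|} |v(ξ)| dξ) |v(η)|² dη`.
By Cauchy–Schwarz the inner integral is at most `(2|η|)^(1/2) ‖v‖₂`, and Hölder's inequality
interpolates `∫ |η|^(1/2) |v(η)|² dη` between `‖v‖₂²` and the square of the Sobolev norm. Unlike an
estimate of `‖u‖_∞`, this loses nothing at the endpoint `a = 0`, where `H^{1/2}` does not embed
in `L^∞`.
-/

open MeasureTheory Complex

noncomputable section

/-- The dispersive symbol `ω(ξ) = ξ |ξ|^(1+a)`. -/
def disp (a ξ : ℝ) : ℝ := ξ * |ξ| ^ (1 + a)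

/-- Fourier transform on `ℝ`, convention `f̂(ξ) = ∫ e^{ixξ} f(x) dx`. -/
def FT1 (f : ℝ → ℂ) (ξ : ℝ) : ℂ :=
  ∫ x : ℝ, Complex.exp (Complex.I * ((x * ξ : ℝ) : ℂ)) * f x

/-- Spacetime Fourier transform, convention `f̂(ξ,λ) = ∫ e^{i(xξ+tλ)} f(x,t) dx dt`,
for `f : ℝ × ℝ → ℂ` with first coordinate `x` (space) and second `t` (time). -/
def FT2 (f : ℝ × ℝ → ℂ) (ξ lam : ℝ) : ℂ :=
  ∫ p : ℝ × ℝ, Complex.exp (Complex.I * ((p.1 * ξ + p.2 * lam : ℝ) : ℂ)) * f p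

/-- The dyadic cutoffs `χ_j`: `χ_0 = χ₀` and `χ_j(z) = χ(2^{-j} z)` for `j ≥ 1`. -/
def chiJ (χ₀ χ : ℝ → ℝ) (j : ℕ) (z : ℝ) : ℝ :=
  if j = 0 then χ₀ z else χ ((2 : ℝ) ^ (-(j : ℝ)) * z)

/-- Hypotheses on the fixed dyadic cutoffs. -/
structure DyadicCutoffs (χ₀ χ : ℝ → ℝ) : Prop where
  smooth0 : ContDiff ℝ (⊤ : ℕ∞) χ₀
  even0 : ∀ z, χ₀ (-z) = χ₀ z
  mem0 : ∀ z, χ₀ z ∈ Set.Icc (0 : ℝ) 1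
  supp0 : ∀ z, 2 < |z| → χ₀ z = 0
  one0 : ∀ z, |z| ≤ 1 → χ₀ z = 1
  smooth1 : ContDiff ℝ (⊤ : ℕ∞) χ
  even1 : ∀ z, χ (-z) = χ z
  mem1 : ∀ z, χ z ∈ Set.Icc (0 : ℝ) 1
  supp1 : ∀ z, χ z ≠ 0 → 1 / 2 < |z| ∧ |z| < 2
  partition : ∀ z, ∑' j : ℕ, chiJ χ₀ χ j z = 1

/-- A smooth time cutoff supported in `[-1,1]`. -/
structure TimeCutoff (ψ : ℝ → ℝ) : Prop where
  smooth : ContDiff ℝ (⊤ : ℕ∞) ψ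
  supp : ∀ t, ψ t ≠ 0 → |t| ≤ 1

/-- The norm `‖f‖_{X^b_s}`. -/
def Xnorm (a : ℝ) (χ₀ χ : ℝ → ℝ) (b s : ℝ) (f : ℝ × ℝ → ℂ) : ℝ :=
  ∑' j : ℕ, (2 : ℝ) ^ ((j : ℝ) * b) *
    (∫ p : ℝ × ℝ, chiJ χ₀ χ j (p.2 - disp a p.1) * (1 + |p.1|) ^ (2 * s) *
      ‖FT2 f p.1 p.2‖ ^ 2) ^ ((1 : ℝ) / 2)

/-- The norm `‖f‖_{Y^b_{s₀,s₁}} = ‖x·f‖_{X^b_{s₀}} + ‖t·f‖_{X^b_{s₁}}`. -/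
def Ynorm (a : ℝ) (χ₀ χ : ℝ → ℝ) (b s₀ s₁ : ℝ) (f : ℝ × ℝ → ℂ) : ℝ :=
  Xnorm a χ₀ χ b s₀ (fun p => (p.1 : ℂ) * f p) +
    Xnorm a χ₀ χ b s₁ (fun p => (p.2 : ℂ) * f p)

/-- The norm `‖f‖_{Z^b_s} = ‖f‖_{X^b_s} + ‖f‖_{Y^b_{s-2s*,s}}`, where `s* = 1/2 + a/2`. -/
def Znorm (a : ℝ) (χ₀ χ : ℝ → ℝ) (b s : ℝ) (f : ℝ × ℝ → ℂ) : ℝ :=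
  Xnorm a χ₀ χ b s f + Ynorm a χ₀ χ b (s - 2 * (1 / 2 + a / 2)) s f

/-- The norm `‖f‖_{X̃^b_s}`. -/
def XtildeNorm (a b s : ℝ) (f : ℝ × ℝ → ℂ) : ℝ :=
  (∫ p : ℝ × ℝ, (1 + |p.2 - disp a p.1|) ^ (2 * b) * (1 + |p.1|) ^ (2 * s) *
    ‖FT2 f p.1 p.2‖ ^ 2) ^ ((1 : ℝ) / 2)

/-- The Sobolev norm `‖g‖_{H^s} = (∫ (1+|ξ|)^{2s} |ĝ(ξ)|² dξ)^{1/2}`. -/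
def Hnorm (s : ℝ) (g : ℝ → ℂ) : ℝ :=
  (∫ ξ : ℝ, (1 + |ξ|) ^ (2 * s) * ‖FT1 g ξ‖ ^ 2) ^ ((1 : ℝ) / 2)

/-- The weighted norm `‖g‖_{F^s} = ‖g‖_{H^s} + ‖x·g‖_{H^{s-2s*}}` (here `sstar = s*`). -/
def Fnorm (sstar s : ℝ) (g : ℝ → ℂ) : ℝ :=
  Hnorm s g + Hnorm (s - 2 * sstar) (fun x => (x : ℂ) * g x)

/-- The `L^p` norm `(∫ ‖f‖^p)^{1/p}`. -/
def Lpnorm {α : Type*} [MeasureSpace α] {E : Type*} [NormedAddCommGroup E]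
    (p : ℝ) (f : α → E) : ℝ :=
  (∫ x, ‖f x‖ ^ p) ^ (1 / p)

/-- The linear propagator `W(t)`, defined via Fourier inversion so that its Fourier
transform in `x` is `e^{itω(ξ)} û₀(ξ)`. -/
def Wgrp (a : ℝ) (u₀ : ℝ → ℂ) (t x : ℝ) : ℂ :=
  ((1 / (2 * Real.pi) : ℝ) : ℂ) *
    ∫ ξ : ℝ, Complex.exp (-(Complex.I * ((x * ξ : ℝ) : ℂ))) *
      (Complex.exp (Complex.I * ((t * disp a ξ : ℝ) : ℂ)) * FT1 u₀ ξ)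

/-- The Fourier multiplier `D^σ` with symbol `|ξ|^σ`, via Fourier inversion. -/
def Dop (σ : ℝ) (g : ℝ → ℂ) (x : ℝ) : ℂ :=
  ((1 / (2 * Real.pi) : ℝ) : ℂ) *
    ∫ ξ : ℝ, Complex.exp (-(Complex.I * ((x * ξ : ℝ) : ℂ))) *
      (((|ξ| ^ σ : ℝ) : ℂ) * FT1 g ξ)

open Metric
open scoped FourierTransform ENNReal SchwartzMap

section Inequalities

variable {α : Type*} [MeasurableSpace α] {μ : Measure α}

lemma setLIntegral_le_rpow_measure_mul {f : α → ℝ≥0∞} (hf : AEMeasurable f μ) (s : Set α) :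
    ∫⁻ x in s, f x ∂μ ≤ μ s ^ (1 / 2 : ℝ) * (∫⁻ x, f x ^ 2 ∂μ) ^ (1 / 2 : ℝ) := by
  have sqrt_sq (b : ℝ≥0∞) : (b ^ 2) ^ (1 / 2 : ℝ) = b := by
    rw [← ENNReal.rpow_natCast, ← ENNReal.rpow_mul]; norm_num
  calc ∫⁻ x in s, f x ∂μ
      = ∫⁻ x in s, 1 ^ (1 / 2 : ℝ) * (f x ^ 2) ^ (1 / 2 : ℝ) ∂μ := by
        simp only [ENNReal.one_rpow, one_mul, sqrt_sq]
    _ ≤ (∫⁻ _ in s, 1 ∂μ) ^ (1 / 2 : ℝ) * (∫⁻ x in s, f x ^ 2 ∂μ) ^ (1 / 2 : ℝ) :=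
        ENNReal.lintegral_mul_norm_pow_le aemeasurable_const (hf.restrict.pow_const 2)
          (by norm_num) (by norm_num) (by norm_num)
    _ ≤ μ s ^ (1 / 2 : ℝ) * (∫⁻ x, f x ^ 2 ∂μ) ^ (1 / 2 : ℝ) := by
        rw [setLIntegral_one]
        gcongr
        exact Measure.restrict_le_self

lemma lintegral_rpow_mul_le {w f : α → ℝ≥0∞} (hw : AEMeasurable w μ) (hf : AEMeasurable f μ)
    {θ : ℝ} (hθ₀ : 0 ≤ θ) (hθ₁ : θ ≤ 1) :
    ∫⁻ x, w x ^ θ * f x ∂μ ≤ (∫⁻ x, f x ∂μ) ^ (1 - θ) * (∫⁻ x, w x * f x ∂μ) ^ θ := by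
  have factor (x : α) : w x ^ θ * f x = f x ^ (1 - θ) * (w x * f x) ^ θ := by
    rw [ENNReal.mul_rpow_of_nonneg _ _ hθ₀, mul_left_comm,
      ← ENNReal.rpow_add_of_nonneg _ _ (sub_nonneg.2 hθ₁) hθ₀, sub_add_cancel, ENNReal.rpow_one]
  simp only [factor]
  exact ENNReal.lintegral_mul_norm_pow_le hf (hw.mul hf) (sub_nonneg.2 hθ₁) hθ₀
    (sub_add_cancel _ _)

end Inequalities

section Trilinear

variable {E : Type*} [NormedAddCommGroup E]

/-- The map `(ξ, η) ↦ (ξ, ζ)`, where `ξ + η + ζ = 0`. Together with `Prod.swap` it generates the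
permutations of the three frequencies. -/
def replaceSnd (p : E × E) : E × E := (p.1, -p.1 - p.2)

/-- The product `f(ξ) f(η)²` restricted to `‖ξ‖ ≤ ‖η‖`: the low frequency `ξ` occurs once, the
high frequency `η` twice. -/
def lowHigh (f : E → ℝ≥0∞) (p : E × E) : ℝ≥0∞ :=
  (closedBall 0 ‖p.2‖).indicator f p.1 * f p.2 ^ 2

lemma lowHigh_of_norm_le (f : E → ℝ≥0∞) {x y : E} (h : ‖x‖ ≤ ‖y‖) :
    lowHigh f (x, y) = f x * f y ^ 2 := by
  rw [lowHigh, Set.indicator_of_mem (by simpa using h)]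

lemma mul_mul_le_lowHigh_add_lowHigh (f : E → ℝ≥0∞) {x y z : E} (hy : ‖x‖ ≤ ‖y‖)
    (hz : ‖x‖ ≤ ‖z‖) : f x * (f y * f z) ≤ lowHigh f (x, y) + lowHigh f (x, z) := by
  rw [lowHigh_of_norm_le f hy, lowHigh_of_norm_le f hz, ← mul_add]
  gcongr
  rcases le_total (f y) (f z) with h | h
  · exact (mul_le_mul_left h _).trans (sq (f z) ▸ le_add_self)
  · exact (mul_le_mul_right h _).trans (sq (f y) ▸ le_self_add)

lemma mul_mul_le_sum_lowHigh (f : E → ℝ≥0∞) (x y z : E) :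
    f x * (f y * f z) ≤ (lowHigh f (x, y) + lowHigh f (x, z)) +
      (lowHigh f (y, x) + lowHigh f (y, z)) + (lowHigh f (z, x) + lowHigh f (z, y)) := by
  by_cases hx : ‖x‖ ≤ ‖y‖ ∧ ‖x‖ ≤ ‖z‖
  · exact (mul_mul_le_lowHigh_add_lowHigh f hx.1 hx.2).trans
      (le_self_add.trans le_self_add)
  by_cases hy : ‖y‖ ≤ ‖x‖ ∧ ‖y‖ ≤ ‖z‖
  · rw [mul_left_comm]
    exact (mul_mul_le_lowHigh_add_lowHigh f hy.1 hy.2).trans (le_add_self.trans le_self_add)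
  · have hz : ‖z‖ ≤ ‖x‖ ∧ ‖z‖ ≤ ‖y‖ := by grind
    rw [← mul_assoc, mul_comm]
    exact (mul_mul_le_lowHigh_add_lowHigh f hz.1 hz.2).trans le_add_self

variable [MeasurableSpace E] [BorelSpace E]

lemma measurable_lowHigh {f : E → ℝ≥0∞} (hf : Measurable f) : Measurable (lowHigh f) := by
  have hball : MeasurableSet {p : E × E | p.1 ∈ closedBall 0 ‖p.2‖} := by
    simp only [mem_closedBall_zero_iff]
    exact measurableSet_le (by fun_prop) (by fun_prop)
  exact ((hf.comp measurable_fst).indicator hball).mul (by fun_prop)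

variable {μ : Measure E} [SFinite μ]

lemma lintegral_lowHigh_le {f : E → ℝ≥0∞} (hf : Measurable f) :
    ∫⁻ p, lowHigh f p ∂μ.prod μ ≤ (∫⁻ x, f x ^ 2 ∂μ) ^ (1 / 2 : ℝ) *
      ∫⁻ y, μ (closedBall 0 ‖y‖) ^ (1 / 2 : ℝ) * f y ^ 2 ∂μ := by
  have inner_eq (y : E) :
      ∫⁻ x, lowHigh f (x, y) ∂μ = (∫⁻ x in closedBall 0 ‖y‖, f x ∂μ) * f y ^ 2 := by
    simp only [lowHigh]
    rw [lintegral_mul_const _ (hf.indicator measurableSet_closedBall),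
      lintegral_indicator measurableSet_closedBall]
  rw [lintegral_prod_symm' _ (measurable_lowHigh hf)]
  simp only [inner_eq]
  refine (lintegral_mono fun y => mul_le_mul_left
    (setLIntegral_le_rpow_measure_mul hf.aemeasurable _) _).trans_eq ?_
  have hball : Measurable fun y : E => μ (closedBall 0 ‖y‖) :=
    Monotone.measurable (fun _ _ h => measure_mono (closedBall_subset_closedBall h))
      |>.comp measurable_norm
  have hweight : Measurable fun y : E => μ (closedBall 0 ‖y‖) ^ (1 / 2 : ℝ) * f y ^ 2 :=
    (hball.pow_const _).mul (hf.pow_const 2)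
  rw [← lintegral_const_mul _ hweight]
  exact lintegral_congr fun y => by ring

variable [SecondCountableTopology E] [μ.IsAddLeftInvariant] [μ.IsNegInvariant]

lemma measurePreserving_replaceSnd :
    MeasurePreserving (replaceSnd : E × E → E × E) (μ.prod μ) (μ.prod μ) :=
  (MeasurePreserving.id μ).skew_product (by fun_prop)
    (.of_forall fun x => Measure.map_sub_left_eq_self μ (-x))

lemma lintegral_mul_mul_le_lintegral_lowHigh {f : E → ℝ≥0∞} (hf : Measurable f) :
    ∫⁻ p : E × E, f p.1 * (f p.2 * f (-p.1 - p.2)) ∂μ.prod μ ≤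
      6 * ∫⁻ p, lowHigh f p ∂μ.prod μ := by
  have hσ := measurePreserving_replaceSnd (μ := μ)
  have hτ : MeasurePreserving Prod.swap (μ.prod μ) (μ.prod μ) := Measure.measurePreserving_swap
  have hk := measurable_lowHigh hf
  set A : E × E → ℝ≥0∞ := fun p => lowHigh f p + lowHigh f (replaceSnd p)
  have hA : Measurable A := hk.add (hk.comp hσ.measurable)
  have integral_A : ∫⁻ p, A p ∂μ.prod μ = 2 * ∫⁻ p, lowHigh f p ∂μ.prod μ := by
    rw [lintegral_add_left hk, hσ.lintegral_comp hk, two_mul]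
  have pointwise (p : E × E) : f p.1 * (f p.2 * f (-p.1 - p.2)) ≤
      A p + A p.swap + A (replaceSnd p).swap := by
    have h := mul_mul_le_sum_lowHigh f p.1 p.2 (-p.1 - p.2)
    have hswap : -p.2 - p.1 = -p.1 - p.2 := by abel
    have hcancel : -(-p.1 - p.2) - p.1 = p.2 := by abel
    simpa only [A, replaceSnd, Prod.swap, hswap, hcancel] using h
  calc ∫⁻ p : E × E, f p.1 * (f p.2 * f (-p.1 - p.2)) ∂μ.prod μ
      ≤ ∫⁻ p, A p + A p.swap + A (replaceSnd p).swap ∂μ.prod μ := lintegral_mono pointwise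
    _ = 3 * ∫⁻ p, A p ∂μ.prod μ := by
        have hAτ : Measurable fun p : E × E => A p.swap := hA.comp hτ.measurable
        have hsum : Measurable fun p => A p + A p.swap := hA.add hAτ
        rw [lintegral_add_left hsum, lintegral_add_left hA,
          hτ.lintegral_comp hA, hσ.lintegral_comp hAτ, hτ.lintegral_comp hA]
        ring
    _ = 6 * ∫⁻ p, lowHigh f p ∂μ.prod μ := by rw [integral_A]; ring

end Trilinear

lemma lintegral_mul_mul_le_interpolation {s : ℝ} (hs : 1 / 4 ≤ s) {f : ℝ → ℝ≥0∞}
    (hf : Measurable f) :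
    ∫⁻ p : ℝ × ℝ, f p.1 * (f p.2 * f (-p.1 - p.2)) ≤
      6 * (∫⁻ x, f x ^ 2) ^ (3 / 2 - 1 / (4 * s)) *
        (∫⁻ x, ENNReal.ofReal ((1 + ‖(2 * Real.pi) • x‖) ^ (2 * s)) * f x ^ 2) ^ (1 / (4 * s)) := by
  set w : ℝ → ℝ≥0∞ := fun x => ENNReal.ofReal ((1 + ‖(2 * Real.pi) • x‖) ^ (2 * s))
  have hθ₀ : 0 ≤ 1 / (4 * s) := by positivity
  have hθ₁ : 1 / (4 * s) ≤ 1 := by rw [div_le_one (by positivity)]; linarith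
  have ball_le (y : ℝ) : volume (closedBall (0 : ℝ) ‖y‖) ^ (1 / 2 : ℝ) ≤ w y ^ (1 / (4 * s)) := by
    have hexp : 2 * s * (1 / (4 * s)) = 1 / 2 := by field_simp; norm_num
    rw [Real.volume_closedBall, ENNReal.ofReal_rpow_of_nonneg (by positivity) hθ₀,
      ← Real.rpow_mul (by positivity), hexp,
      ENNReal.ofReal_rpow_of_nonneg (by positivity) (by norm_num)]
    refine ENNReal.ofReal_le_ofReal (Real.rpow_le_rpow (by positivity) ?_ (by norm_num))
    rw [norm_smul, Real.norm_of_nonneg Real.two_pi_pos.le]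
    nlinarith [norm_nonneg y, Real.pi_gt_three]
  calc ∫⁻ p : ℝ × ℝ, f p.1 * (f p.2 * f (-p.1 - p.2))
      ≤ 6 * ∫⁻ p : ℝ × ℝ, lowHigh f p := lintegral_mul_mul_le_lintegral_lowHigh hf
    _ ≤ 6 * ((∫⁻ x, f x ^ 2) ^ (1 / 2 : ℝ) *
          ∫⁻ y, volume (closedBall (0 : ℝ) ‖y‖) ^ (1 / 2 : ℝ) * f y ^ 2) := by
        gcongr; exact lintegral_lowHigh_le hf
    _ ≤ 6 * ((∫⁻ x, f x ^ 2) ^ (1 / 2 : ℝ) * ∫⁻ y, w y ^ (1 / (4 * s)) * f y ^ 2) := by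
        gcongr with y; exact ball_le y
    _ ≤ 6 * ((∫⁻ x, f x ^ 2) ^ (1 / 2 : ℝ) * ((∫⁻ x, f x ^ 2) ^ (1 - 1 / (4 * s)) *
          (∫⁻ x, w x * f x ^ 2) ^ (1 / (4 * s)))) := by
        gcongr; exact lintegral_rpow_mul_le (by fun_prop) (by fun_prop) hθ₀ hθ₁
    _ = 6 * (∫⁻ x, f x ^ 2) ^ (3 / 2 - 1 / (4 * s)) *
          (∫⁻ x, w x * f x ^ 2) ^ (1 / (4 * s)) := by
        rw [← mul_assoc (_ ^ _), ← ENNReal.rpow_add_of_nonneg _ _ (by norm_num) (by linarith),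
          ← mul_assoc]
        ring_nf

section Schwartz

variable {V : Type*} [NormedAddCommGroup V] [InnerProductSpace ℝ V] [FiniteDimensional ℝ V]
  [MeasurableSpace V] [BorelSpace V]

lemma integral_pow_three_eq_integral_convolution (u : 𝓢(V, ℂ)) :
    ∫ x, u x ^ 3 =
      ∫ x, (𝓕⁻ u).convolution (ContinuousLinearMap.mul ℂ ℂ) (𝓕⁻ u) (-x) * 𝓕⁻ u x := by
  set w := (𝓕⁻ u).convolution (ContinuousLinearMap.mul ℂ ℂ) (𝓕⁻ u)
  have fourier_w (x : V) : 𝓕 w x = u x * u x := by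
    simp [w, SchwartzMap.fourier_convolution]
  have fourier_neg (x : V) : 𝓕 u (-x) = 𝓕⁻ u x := by
    rw [SchwartzMap.fourierInv_coe, Real.fourierInv_eq_fourier_neg, SchwartzMap.fourier_coe]
  calc ∫ x, u x ^ 3 = ∫ x, 𝓕 w x * u x := by simp only [fourier_w, pow_three']
    _ = ∫ x, w x * 𝓕 u x := SchwartzMap.integral_fourier_mul_eq w u
    _ = ∫ x, w (-x) * 𝓕 u (-x) := (integral_neg_eq_self _ _).symm
    _ = ∫ x, w (-x) * 𝓕⁻ u x := by simp only [fourier_neg]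

lemma enorm_convolution_mul_le (v w : 𝓢(V, ℂ)) (x : V) :
    ‖v.convolution (ContinuousLinearMap.mul ℂ ℂ) w x‖ₑ ≤ ∫⁻ y, ‖v y‖ₑ * ‖w (x - y)‖ₑ := by
  rw [SchwartzMap.convolution_apply]
  exact (enorm_integral_le_lintegral_enorm _).trans_eq (by simp [enorm_mul])

lemma enorm_integral_pow_three_le (u : 𝓢(V, ℂ)) :
    ‖∫ x, u x ^ 3‖ₑ ≤
      ∫⁻ p : V × V, ‖𝓕⁻ u p.1‖ₑ * (‖𝓕⁻ u p.2‖ₑ * ‖𝓕⁻ u (-p.1 - p.2)‖ₑ) := by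
  rw [integral_pow_three_eq_integral_convolution, Measure.volume_eq_prod]
  generalize 𝓕⁻ u = v
  have hv : Measurable v := v.continuous.measurable
  rw [lintegral_prod _ (Measurable.aemeasurable (by fun_prop))]
  refine (enorm_integral_le_lintegral_enorm _).trans (lintegral_mono fun x => ?_)
  calc ‖v.convolution (ContinuousLinearMap.mul ℂ ℂ) v (-x) * v x‖ₑ
      ≤ (∫⁻ y, ‖v y‖ₑ * ‖v (-x - y)‖ₑ) * ‖v x‖ₑ := by
        rw [enorm_mul]; gcongr; exact enorm_convolution_mul_le v v (-x)
    _ = ∫⁻ y, ‖v x‖ₑ * (‖v y‖ₑ * ‖v (-x - y)‖ₑ) := by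
        rw [mul_comm, lintegral_const_mul _ (by fun_prop)]

lemma integrable_one_add_norm_smul_rpow_mul_norm_sq (v : 𝓢(V, ℂ)) (c : ℝ) {b : ℝ} (hb : 0 ≤ b) :
    Integrable fun x => (1 + ‖c • x‖) ^ b * ‖v x‖ ^ 2 := by
  set g : V → ℝ := fun x => (1 + ‖c • x‖ ^ 2) ^ (b / 2)
  have hg : g.HasTemperateGrowth :=
    (Function.hasTemperateGrowth_one_add_norm_sq_rpow V (b / 2)).comp
      (c • ContinuousLinearMap.id ℝ V).hasTemperateGrowth
  have weight_le (x : V) : (1 + ‖c • x‖) ^ b ≤ √2 ^ b * g x := by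
    simp only [g]
    rw [Real.rpow_div_two_eq_sqrt _ (by positivity),
      ← Real.mul_rpow (by positivity) (by positivity)]
    exact Real.rpow_le_rpow (by positivity) (one_add_norm_le_sqrt_two_mul_sqrt _) hb
  have dominating : Integrable fun x =>
      √2 ^ b * (‖SchwartzMap.smulLeftCLM ℂ g v x‖ * ‖v x‖) :=
    (((SchwartzMap.smulLeftCLM ℂ g v).memLp 2).norm.integrable_mul (v.memLp 2).norm).const_mul _
  have hcont : Continuous fun x => (1 + ‖c • x‖) ^ b * ‖v x‖ ^ 2 := by
    have := v.continuous
    fun_prop (disch := positivity)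
  refine dominating.mono' hcont.aestronglyMeasurable (.of_forall fun x => ?_)
  rw [Real.norm_of_nonneg (show 0 ≤ (1 + ‖c • x‖) ^ b * ‖v x‖ ^ 2 by positivity),
    SchwartzMap.smulLeftCLM_apply_apply hg, norm_smul (g x),
    Real.norm_of_nonneg (show 0 ≤ g x by positivity)]
  calc (1 + ‖c • x‖) ^ b * ‖v x‖ ^ 2 ≤ √2 ^ b * g x * ‖v x‖ ^ 2 := by gcongr; exact weight_le x
    _ = √2 ^ b * (g x * ‖v x‖ * ‖v x‖) := by ring

lemma lintegral_one_add_norm_smul_rpow_mul_enorm_sq (v : 𝓢(V, ℂ)) (c : ℝ) {b : ℝ}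
    (hb : 0 ≤ b) :
    ∫⁻ x, ENNReal.ofReal ((1 + ‖c • x‖) ^ b) * ‖v x‖ₑ ^ 2 =
      ENNReal.ofReal (∫ x, (1 + ‖c • x‖) ^ b * ‖v x‖ ^ 2) := by
  rw [ofReal_integral_eq_lintegral_ofReal (integrable_one_add_norm_smul_rpow_mul_norm_sq v c hb)
    (.of_forall fun x => by positivity)]
  refine lintegral_congr fun x => ?_
  rw [ENNReal.ofReal_mul (by positivity), ENNReal.ofReal_pow (by positivity), ofReal_norm]

end Schwartz

section Norms

lemma Lpnorm_nonneg {α : Type*} [MeasureSpace α] {F : Type*} [NormedAddCommGroup F] (p : ℝ)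
    (f : α → F) : 0 ≤ Lpnorm p f :=
  Real.rpow_nonneg (integral_nonneg fun _ => by positivity) _

lemma Lpnorm_two_sq {α : Type*} [MeasureSpace α] {F : Type*} [NormedAddCommGroup F]
    (f : α → F) : Lpnorm 2 f ^ 2 = ∫ x, ‖f x‖ ^ 2 := by
  simp only [Lpnorm, Real.rpow_two, ← Real.sqrt_eq_rpow]
  exact Real.sq_sqrt (integral_nonneg fun _ => by positivity)

lemma Hnorm_nonneg (s : ℝ) (g : ℝ → ℂ) : 0 ≤ Hnorm s g :=
  Real.rpow_nonneg (integral_nonneg fun _ => by positivity) _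

lemma Hnorm_sq (s : ℝ) (g : ℝ → ℂ) :
    Hnorm s g ^ 2 = ∫ ξ : ℝ, (1 + |ξ|) ^ (2 * s) * ‖FT1 g ξ‖ ^ 2 := by
  rw [Hnorm, ← Real.sqrt_eq_rpow]
  exact Real.sq_sqrt (integral_nonneg fun _ => by positivity)

lemma FT1_two_pi_mul (f : ℝ → ℂ) (η : ℝ) : FT1 f (2 * Real.pi * η) = 𝓕⁻ f η := by
  rw [FT1, Real.fourierInv_eq']
  congr! 3 with x
  simp only [RCLike.inner_apply, conj_trivial]
  push_cast
  ring_nf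

lemma integral_one_add_norm_rpow_mul_norm_fourierInv_sq (s : ℝ) (f : ℝ → ℂ) :
    ∫ η : ℝ, (1 + ‖(2 * Real.pi) • η‖) ^ (2 * s) * ‖𝓕⁻ f η‖ ^ 2 =
      (2 * Real.pi)⁻¹ * Hnorm s f ^ 2 := by
  simp only [← FT1_two_pi_mul, smul_eq_mul, Real.norm_eq_abs]
  rw [Measure.integral_comp_mul_left (fun ξ => (1 + |ξ|) ^ (2 * s) * ‖FT1 f ξ‖ ^ 2), Hnorm_sq,
    abs_of_pos (by positivity), smul_eq_mul]

lemma lintegral_enorm_fourierInv_sq {V : Type*} [NormedAddCommGroup V] [InnerProductSpace ℝ V]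
    [FiniteDimensional ℝ V] [MeasurableSpace V] [BorelSpace V] (u : 𝓢(V, ℂ)) :
    ∫⁻ η, ‖𝓕⁻ u η‖ₑ ^ 2 = ENNReal.ofReal (Lpnorm 2 u ^ 2) := by
  have h := lintegral_one_add_norm_smul_rpow_mul_enorm_sq (𝓕⁻ u) 0 le_rfl
  simp only [Real.rpow_zero, ENNReal.ofReal_one, one_mul] at h
  rw [h, ← SchwartzMap.integral_norm_sq_fourier, FourierTransform.fourier_fourierInv_eq,
    Lpnorm_two_sq]

lemma lintegral_weight_mul_enorm_fourierInv_sq_le {s : ℝ} (hs : 0 ≤ s) (u : 𝓢(ℝ, ℂ)) :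
    ∫⁻ η : ℝ, ENNReal.ofReal ((1 + ‖(2 * Real.pi) • η‖) ^ (2 * s)) * ‖𝓕⁻ u η‖ₑ ^ 2 ≤
      ENNReal.ofReal (Hnorm s u ^ 2) := by
  rw [lintegral_one_add_norm_smul_rpow_mul_enorm_sq _ _ (by positivity),
    SchwartzMap.fourierInv_coe, integral_one_add_norm_rpow_mul_norm_fourierInv_sq]
  refine ENNReal.ofReal_le_ofReal (mul_le_of_le_one_left (sq_nonneg _) (inv_le_one_of_one_le₀ ?_))
  linarith [Real.pi_gt_three]

end Norms

theorem norm_integral_pow_three_le {s : ℝ} (hs : 1 / 4 ≤ s) (u : 𝓢(ℝ, ℂ)) :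
    ‖∫ x, u x ^ 3‖ ≤ 6 * Lpnorm 2 u ^ (3 - 1 / (2 * s)) * Hnorm s u ^ (1 / (2 * s)) := by
  have hL := Lpnorm_nonneg 2 u
  have hH := Hnorm_nonneg s u
  have hθ₀ : 0 ≤ 1 / (4 * s) := by positivity
  have hθ₁ : 1 / (4 * s) ≤ 1 := by rw [div_le_one (by positivity)]; linarith
  have bound : ‖∫ x, u x ^ 3‖ₑ ≤ 6 * ENNReal.ofReal (Lpnorm 2 u ^ 2) ^ (3 / 2 - 1 / (4 * s)) *
      ENNReal.ofReal (Hnorm s u ^ 2) ^ (1 / (4 * s)) := by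
    refine (enorm_integral_pow_three_le u).trans ((lintegral_mul_mul_le_interpolation hs
      (𝓕⁻ u).continuous.measurable.enorm).trans ?_)
    rw [lintegral_enorm_fourierInv_sq]
    gcongr
    exact lintegral_weight_mul_enorm_fourierInv_sq_le (by linarith) u
  rw [ENNReal.ofReal_rpow_of_nonneg (sq_nonneg _) (by linarith),
    ENNReal.ofReal_rpow_of_nonneg (sq_nonneg _) hθ₀, ← Real.rpow_natCast_mul hL,
    ← Real.rpow_natCast_mul hH, ← ENNReal.ofReal_ofNat 6, ← ENNReal.ofReal_mul (by positivity),
    ← ENNReal.ofReal_mul (by positivity), ← ofReal_norm,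
    ENNReal.ofReal_le_ofReal_iff (by positivity)] at bound
  have hexp_L : 3 - 1 / (2 * s) = 2 * (3 / 2 - 1 / (4 * s)) := by field_simp; ring
  have hexp_H : 1 / (2 * s) = 2 * (1 / (4 * s)) := by field_simp; norm_num
  rw [hexp_L, hexp_H]
  exact_mod_cast bound

theorem statement0_general {a : ℝ} (ha : -1 / 2 ≤ a) (u : 𝓢(ℝ, ℂ)) :
    ‖∫ x, u x ^ 3‖ ≤
      6 * Lpnorm 2 u ^ (3 * (1 - 1 / (3 + 3 * a))) *
        Hnorm (1 / 2 + a / 2) u ^ (3 / (3 + 3 * a)) := by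
  have ha' : 1 + a ≠ 0 := by linarith
  convert norm_integral_pow_three_le (s := 1 / 2 + a / 2) (by linarith) u using 3 <;> field_simp

theorem statement0 (a : ℝ) (ha : a ∈ Set.Icc (0 : ℝ) 1) :
    ∃ C > 0, ∀ u : SchwartzMap ℝ ℝ,
      |∫ x : ℝ, (u x) ^ 3| ≤
        C * Lpnorm 2 (fun x : ℝ => u x) ^ (3 * (1 - 1 / (3 + 3 * a))) *
          Hnorm (1 / 2 + a / 2) (fun x : ℝ => ((u x : ℝ) : ℂ)) ^ (3 / (3 + 3 * a)) := by
  refine ⟨6, by norm_num, fun u => ?_⟩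
  have hu : ⇑(u.postcompCLM ofRealCLM) = fun x => (u x : ℂ) := rfl
  simpa [Lpnorm, hu, ← ofReal_pow, integral_complex_ofReal] using
    statement0_general (by linarith [ha.1]) (u.postcompCLM ofRealCLM)
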